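/- arXiv:1304.0741 — 6 statements merged into one kernel-verified Lean document; each statement's English description precedes it below -/
import Mathlib

section
/- There exists a constant c with 0 < c < 1, independent of t, such that the following holds for every integer t ≥ 2, every k0 ∈ {0,…,t−1}, and every number of measurements s ≥ 1. Suppose s independent basic measurements are performed, where for each i the multiple M_i is chosen uniformly at random from {1,…,t−1}, the angle θ_i is chosen uniformly at random from [0,2π), and the outcome v_i ∈ {0,1} is distributed with probabilities P_{M_i,θ_i}(v_i | k0). For k ∈ {0,…,t−1} let P(v_1,…,v_s | k) = ∏_{i=1}^s P_{M_i,θ_i}(v_i | k). Then the probability (over the random choices of M_i, θ_i and the random outcomes) that there exists k' ≠ k0 with P(v_1,…,v_s | k') ≥ P(v_1,…,v_s | k0) is at most t·c^s. -/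
/-!
The argument is a Chernoff (Bhattacharyya) bound followed by a union bound over `k'`.
If `P(v|k0) ≤ P(v|k')`, then `P(v|k0) ≤ √(P(v|k0) P(v|k')) = ∏ i, √(p_i p'_i)`, and for
`p, p' ∈ [0,1]` one has `√(p p') ≤ (p + p')/2 - (p - p')²/8` (`sqrt_mul_le_affinity`).
Replacing the square root by this polynomial, the expression factorises over the measurements.
Summing one factor over the two outcomes gives `1 - (cos a - cos b)²/16`, where `a`, `b` are the
angles belonging to `k0` and `k'` (`sum_affinity`); averaging over `θ` turns this into
`1 - (1 - cos (2πM(k0 - k')/t))/16` (`integral_factor`). Since the nontrivial `t`-th roots of unity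
sum to `-1` (`sum_cos_Icc`), the average over `M` is at most `15/16`, which is the constant `c`.
-/

open MeasureTheory Finset
open scoped Classical

/-- Outcome probabilities of the basic phase-estimation measurement with multiple `M`
and angle `θ`, for phase `k/t`: `P(false|k) = (1+cos(2πMk/t+θ))/2`,
`P(true|k) = (1-cos(2πMk/t+θ))/2`. -/
noncomputable def measP (t M : ℕ) (θ : ℝ) (v : Bool) (k : ℕ) : ℝ :=
  if v then (1 - Real.cos (2 * Real.pi * M * (k / t : ℝ) + θ)) / 2
  else (1 + Real.cos (2 * Real.pi * M * (k / t : ℝ) + θ)) / 2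

/-- Polynomial upper bound for `√(p p')` on the unit square. -/
noncomputable def affinity (p q : ℝ) : ℝ := (p + q) / 2 - (p - q) ^ 2 / 8

/-- With `x = √p`, `y = √q`, this is `(x - y)² (x + y)² ≤ 4 (x - y)²`. -/
lemma sqrt_mul_le_affinity {p q : ℝ} (hp : 0 ≤ p) (hp1 : p ≤ 1) (hq : 0 ≤ q) (hq1 : q ≤ 1) :
    √(p * q) ≤ affinity p q := by
  rw [Real.sqrt_mul hp, affinity]
  have hx1 : √p ≤ 1 := Real.sqrt_le_one.mpr hp1
  have hy1 : √q ≤ 1 := Real.sqrt_le_one.mpr hq1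
  have hx0 := Real.sqrt_nonneg p
  have hy0 := Real.sqrt_nonneg q
  have hx := Real.sq_sqrt hp
  have hy := Real.sq_sqrt hq
  generalize √p = x at *
  generalize √q = y at *
  subst hx hy
  have h : (x + y) ^ 2 ≤ 4 := by nlinarith
  have := mul_nonneg (sq_nonneg (x - y)) (sub_nonneg.mpr h)
  nlinarith

lemma measP_nonneg (t M : ℕ) (θ : ℝ) (v : Bool) (k : ℕ) : 0 ≤ measP t M θ v k := by
  unfold measP
  split_ifs
  · linarith [Real.cos_le_one (2 * Real.pi * M * (k / t : ℝ) + θ)]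
  · linarith [Real.neg_one_le_cos (2 * Real.pi * M * (k / t : ℝ) + θ)]

lemma measP_le_one (t M : ℕ) (θ : ℝ) (v : Bool) (k : ℕ) : measP t M θ v k ≤ 1 := by
  unfold measP
  split_ifs
  · linarith [Real.neg_one_le_cos (2 * Real.pi * M * (k / t : ℝ) + θ)]
  · linarith [Real.cos_le_one (2 * Real.pi * M * (k / t : ℝ) + θ)]

/-- The contribution of one measurement to the bound, after summing over its outcome. -/
noncomputable def factor (t k k' M : ℕ) (θ : ℝ) : ℝ :=
  1 - (Real.cos (2 * Real.pi * M * (k / t : ℝ) + θ)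
    - Real.cos (2 * Real.pi * M * (k' / t : ℝ) + θ)) ^ 2 / 16

lemma sum_affinity (t k k' M : ℕ) (θ : ℝ) :
    ∑ v : Bool, affinity (measP t M θ v k) (measP t M θ v k') = factor t k k' M θ := by
  simp only [Fintype.sum_bool, affinity, measP, factor, if_true, Bool.false_eq_true, if_false]
  ring

lemma continuous_factor (t k k' M : ℕ) : Continuous (factor t k k' M) := by
  unfold factor
  fun_prop

lemma le_prod_affinity {s : ℕ} (p q : Fin s → ℝ) (hp : ∀ i, 0 ≤ p i) (hp1 : ∀ i, p i ≤ 1)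
    (hq : ∀ i, 0 ≤ q i) (hq1 : ∀ i, q i ≤ 1) (h : ∏ i, p i ≤ ∏ i, q i) :
    ∏ i, p i ≤ ∏ i, affinity (p i) (q i) := by
  have h0 : 0 ≤ ∏ i, p i := Finset.prod_nonneg fun i _ => hp i
  calc ∏ i, p i ≤ √(∏ i, (p i * q i)) := by
        apply Real.le_sqrt_of_sq_le
        rw [Finset.prod_mul_distrib, sq]
        exact mul_le_mul_of_nonneg_left h h0
    _ = ∏ i, √(p i * q i) :=
        Real.sqrt_prod _ fun i _ => mul_nonneg (hp i) (hq i)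
    _ ≤ ∏ i, affinity (p i) (q i) :=
        Finset.prod_le_prod (fun i _ => Real.sqrt_nonneg _)
          fun i _ => sqrt_mul_le_affinity (hp i) (hp1 i) (hq i) (hq1 i)

lemma affinity_measP_nonneg (t M : ℕ) (θ : ℝ) (v : Bool) (k k' : ℕ) :
    0 ≤ affinity (measP t M θ v k) (measP t M θ v k') :=
  (Real.sqrt_nonneg _).trans <| sqrt_mul_le_affinity (measP_nonneg ..) (measP_le_one ..)
    (measP_nonneg ..) (measP_le_one ..)

/-- The union bound over `k'`, for fixed multiples and angles. -/
lemma sum_outcomes_le (t k0 s : ℕ) (M : Fin s → ℕ) (θ : Fin s → ℝ) :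
    ∑ v : Fin s → Bool,
      (if ∃ k' : ℕ, k' < t ∧ k' ≠ k0 ∧
          ∏ i, measP t (M i) (θ i) (v i) k0 ≤ ∏ i, measP t (M i) (θ i) (v i) k'
        then ∏ i, measP t (M i) (θ i) (v i) k0 else 0)
      ≤ ∑ k' ∈ (Finset.range t).erase k0, ∏ i, factor t k0 k' (M i) (θ i) := by
  simp_rw [← sum_affinity, Finset.prod_univ_sum, Fintype.piFinset_univ]
  rw [Finset.sum_comm]
  refine Finset.sum_le_sum fun v _ => ?_
  have hnn : ∀ k' ∈ (Finset.range t).erase k0,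
      0 ≤ ∏ i, affinity (measP t (M i) (θ i) (v i) k0) (measP t (M i) (θ i) (v i) k') :=
    fun k' _ => Finset.prod_nonneg fun i _ => affinity_measP_nonneg ..
  split_ifs with h
  · obtain ⟨k', hk, hne, hle⟩ := h
    refine (le_prod_affinity _ _ (fun i => measP_nonneg ..) (fun i => measP_le_one ..)
      (fun i => measP_nonneg ..) (fun i => measP_le_one ..) hle).trans ?_
    exact Finset.single_le_sum hnn (Finset.mem_erase.mpr ⟨hne, Finset.mem_range.mpr hk⟩)
  · exact Finset.sum_nonneg hnn

lemma integral_factor (t k k' M : ℕ) :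
    ∫ θ in Set.Ico (0 : ℝ) (2 * Real.pi), factor t k k' M θ
      = 2 * Real.pi * (1 - (1 - Real.cos (2 * Real.pi * M * (((k : ℝ) - k') / t))) / 16) := by
  rw [integral_Ico_eq_integral_Ioc, ← intervalIntegral.integral_of_le (by positivity)]
  set a := 2 * Real.pi * M * (k / t : ℝ) with ha
  set b := 2 * Real.pi * M * (k' / t : ℝ) with hb
  have hab : 2 * Real.pi * M * (((k : ℝ) - k') / t) = a - b := by rw [ha, hb]; ring
  rw [hab]
  -- An antiderivative, read off from the product-to-sum expansion of `(cos a - cos b)²`.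
  have hd : ∀ θ ∈ Set.uIcc (0 : ℝ) (2 * Real.pi), HasDerivAt
      (fun θ : ℝ => (1 - (1 - Real.cos (a - b)) / 16) * θ
        - (Real.sin (2 * (a + θ)) / 4 + Real.sin (2 * (b + θ)) / 4
            - Real.sin (a + b + 2 * θ) / 2) / 16) (factor t k k' M θ) θ := by
    intro θ _
    have hlin : ∀ c : ℝ, HasDerivAt (fun θ : ℝ => 2 * (c + θ)) 2 θ := fun c => by
      simpa using ((hasDerivAt_id θ).const_add c).const_mul 2
    have hlin' : HasDerivAt (fun θ : ℝ => a + b + 2 * θ) 2 θ := by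
      simpa using ((hasDerivAt_id θ).const_mul 2).const_add (a + b)
    have h := (((hasDerivAt_id θ).const_mul (1 - (1 - Real.cos (a - b)) / 16))).sub
      ((((hlin a).sin.div_const 4).add ((hlin b).sin.div_const 4)).sub
        (hlin'.sin.div_const 2) |>.div_const 16)
    refine h.congr_deriv ?_
    have e1 : a - b = (a + θ) - (b + θ) := by ring
    have e2 : a + b + 2 * θ = (a + θ) + (b + θ) := by ring
    rw [e1, e2, Real.cos_sub, Real.cos_add (a + θ), Real.cos_two_mul, Real.cos_two_mul, factor]
    ring
  rw [intervalIntegral.integral_eq_sub_of_hasDerivAt hd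
    ((continuous_factor t k k' M).intervalIntegrable _ _)]
  have s1 : ∀ c : ℝ, Real.sin (2 * (c + 2 * Real.pi)) = Real.sin (2 * (c + 0)) := fun c => by
    have : 2 * (c + 2 * Real.pi) = 2 * (c + 0) + (2 : ℕ) * (2 * Real.pi) := by push_cast; ring
    rw [this, Real.sin_add_nat_mul_two_pi]
  have s2 : Real.sin (a + b + 2 * (2 * Real.pi)) = Real.sin (a + b + 2 * 0) := by
    have : a + b + 2 * (2 * Real.pi) = a + b + 2 * 0 + (2 : ℕ) * (2 * Real.pi) := by
      push_cast; ring
    rw [this, Real.sin_add_nat_mul_two_pi]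
  rw [s1, s1, s2]
  ring

/-- The powers of a nontrivial `t`-th root of unity sum to zero; this is the real part, without
the term `M = 0`. -/
lemma sum_cos_Icc (t k k' : ℕ) (ht : 2 ≤ t) (hk : k < t) (hk' : k' < t) (hne : k' ≠ k) :
    ∑ M ∈ Finset.Icc 1 (t - 1), Real.cos (2 * Real.pi * M * (((k : ℝ) - k') / t)) = -1 := by
  have ht0 : (t : ℝ) ≠ 0 := by positivity
  have htc : (t : ℂ) ≠ 0 := by exact_mod_cast ht0
  set z : ℂ := Complex.exp ((2 * Real.pi * (((k : ℝ) - k') / t) : ℝ) * Complex.I) with hz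
  have hzt : z ^ t = 1 := by
    rw [hz, ← Complex.exp_nat_mul, Complex.exp_eq_one_iff]
    refine ⟨(k : ℤ) - k', ?_⟩
    push_cast
    field_simp
  have hz1 : z ≠ 1 := by
    rw [hz, Ne, Complex.exp_eq_one_iff]
    rintro ⟨n, hn⟩
    have h1 : ((2 * Real.pi * (((k : ℝ) - k') / t) : ℝ) : ℂ) = ((2 * Real.pi * n : ℝ) : ℂ) := by
      apply mul_right_cancel₀ Complex.I_ne_zero
      rw [hn]; push_cast; ring
    have h2 : ((k : ℝ) - k') / t = n :=
      mul_left_cancel₀ (by positivity : 2 * Real.pi ≠ 0) (Complex.ofReal_injective h1)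
    rw [div_eq_iff ht0] at h2
    have h3 : (k : ℤ) - k' = n * t := by exact_mod_cast h2
    have h4 : (k : ℤ) - k' = 0 :=
      Int.eq_zero_of_abs_lt_dvd ⟨n, by rw [h3, mul_comm]⟩ (by rw [abs_lt]; omega)
    omega
  have hsum : ∑ M ∈ Finset.range t, z ^ M = 0 := by
    have := geom_sum_mul z t
    rw [hzt, sub_self] at this
    exact (mul_eq_zero.mp this).resolve_right (sub_ne_zero.mpr hz1)
  have hre : ∀ M : ℕ, (z ^ M).re = Real.cos (2 * Real.pi * M * (((k : ℝ) - k') / t)) := fun M => by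
    rw [hz, ← Complex.exp_nat_mul, ← Complex.exp_ofReal_mul_I_re]
    congr 2
    push_cast
    ring
  have h := congrArg Complex.re hsum
  rw [Complex.re_sum, Finset.sum_congr rfl fun M _ => hre M, Complex.zero_re] at h
  have hr : Finset.range t = insert 0 (Finset.Icc 1 (t - 1)) := by
    ext x; simp only [Finset.mem_range, Finset.mem_insert, Finset.mem_Icc]; omega
  rw [hr, Finset.sum_insert (by simp)] at h
  simp only [Nat.cast_zero, mul_zero, zero_mul, Real.cos_zero] at h
  linarith

lemma sum_integral_factor_le (t k k' : ℕ) (ht : 2 ≤ t) (hk : k < t) (hk' : k' < t)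
    (hne : k' ≠ k) :
    ∑ M ∈ Finset.Icc 1 (t - 1), ∫ θ in Set.Ico (0 : ℝ) (2 * Real.pi), factor t k k' M θ
      ≤ 2 * Real.pi * ((t : ℝ) - 1) * (15 / 16) := by
  simp_rw [integral_factor]
  rw [← Finset.mul_sum, Finset.sum_sub_distrib, ← Finset.sum_div, Finset.sum_sub_distrib,
    sum_cos_Icc t k k' ht hk hk' hne]
  simp only [Finset.sum_const, Nat.card_Icc, nsmul_eq_mul]
  rw [show t - 1 + 1 - 1 = t - 1 by omega, Nat.cast_sub (by omega)]
  push_cast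
  nlinarith [Real.pi_pos]

lemma factor_nonneg (t k k' M : ℕ) (θ : ℝ) : 0 ≤ factor t k k' M θ := by
  rw [← sum_affinity]
  exact Finset.sum_nonneg fun v _ => affinity_measP_nonneg ..

/-- There is a universal constant `0 < c < 1` such that for all `t ≥ 2`, `k0 < t`, `s ≥ 1`,
the probability (over uniformly random multiples `M_i ∈ {1,…,t-1}`, uniformly random angles
`θ_i ∈ [0,2π)`, and measurement outcomes `v_i` distributed according to `P_{M_i,θ_i}(·|k0)`)
that some `k' ≠ k0` has likelihood at least that of `k0` is at most `t·cˢ`. -/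
theorem information_theory_phase_estimation :
    ∃ c : ℝ, 0 < c ∧ c < 1 ∧
      ∀ t : ℕ, 2 ≤ t → ∀ k0 : ℕ, k0 < t → ∀ s : ℕ, 1 ≤ s →
        ((1 / ((t : ℝ) - 1)) ^ s * (1 / (2 * Real.pi)) ^ s) *
            ∑ M ∈ Fintype.piFinset (fun _ : Fin s => Finset.Icc 1 (t - 1)),
              ∫ θ in Set.univ.pi (fun _ : Fin s => Set.Ico (0 : ℝ) (2 * Real.pi)),
                ∑ v : Fin s → Bool,
                  (if ∃ k' : ℕ, k' < t ∧ k' ≠ k0 ∧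
                        ∏ i, measP t (M i) (θ i) (v i) k0 ≤ ∏ i, measP t (M i) (θ i) (v i) k'
                    then ∏ i, measP t (M i) (θ i) (v i) k0 else 0)
          ≤ (t : ℝ) * c ^ s := by
  refine ⟨15 / 16, by norm_num, by norm_num, ?_⟩
  intro t ht k0 hk0 s _
  set K := (Finset.range t).erase k0 with hK
  set B := Set.univ.pi (fun _ : Fin s => Set.Ico (0 : ℝ) (2 * Real.pi)) with hB
  have ht1 : (0 : ℝ) < (t : ℝ) - 1 := by
    have : (2 : ℝ) ≤ t := by exact_mod_cast ht
    linarith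
  have hres : (volume : Measure (Fin s → ℝ)).restrict B
      = Measure.pi fun _ => (volume : Measure ℝ).restrict (Set.Ico (0 : ℝ) (2 * Real.pi)) := by
    rw [hB, volume_pi, Measure.restrict_pi_pi]
  have hint : ∀ (M : Fin s → ℕ) (k' : ℕ), Integrable
      (fun θ : Fin s → ℝ => ∏ i, factor t k0 k' (M i) (θ i)) (volume.restrict B) := by
    intro M k'
    rw [hres]
    refine Integrable.fintype_prod fun i => ?_
    exact ((continuous_factor t k0 k' (M i)).integrableOn_Icc).mono_set Set.Ico_subset_Icc_self
  have hM : ∀ M : Fin s → ℕ,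
      ∫ θ in B, ∑ v : Fin s → Bool,
          (if ∃ k' : ℕ, k' < t ∧ k' ≠ k0 ∧
                ∏ i, measP t (M i) (θ i) (v i) k0 ≤ ∏ i, measP t (M i) (θ i) (v i) k'
            then ∏ i, measP t (M i) (θ i) (v i) k0 else 0)
        ≤ ∑ k' ∈ K, ∏ i, ∫ θ in Set.Ico (0 : ℝ) (2 * Real.pi), factor t k0 k' (M i) θ := by
    intro M
    -- Only the upper bound has to be integrable here, so measurability of the event is not needed.
    refine (integral_mono_of_nonneg (Filter.Eventually.of_forall fun θ => ?_)
      (integrable_finsetSum K fun k' _ => hint M k')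
      (Filter.Eventually.of_forall fun θ => sum_outcomes_le t k0 s M θ)).trans_eq ?_
    · refine Finset.sum_nonneg fun v _ => ?_
      split_ifs
      · exact Finset.prod_nonneg fun i _ => measP_nonneg ..
      · exact le_rfl
    · rw [integral_finsetSum K fun k' _ => hint M k', hres]
      exact Finset.sum_congr rfl fun k' _ => integral_fintype_prod_eq_prod _
  have hk : ∀ k' ∈ K, ∑ M ∈ Fintype.piFinset (fun _ : Fin s => Finset.Icc 1 (t - 1)),
      ∏ i, ∫ θ in Set.Ico (0 : ℝ) (2 * Real.pi), factor t k0 k' (M i) θ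
        ≤ (2 * Real.pi * ((t : ℝ) - 1) * (15 / 16)) ^ s := by
    intro k' hk'
    obtain ⟨hne, hlt⟩ := Finset.mem_erase.mp hk'
    rw [Finset.sum_prod_piFinset (Finset.Icc 1 (t - 1))
      (fun _ m => ∫ θ in Set.Ico (0 : ℝ) (2 * Real.pi), factor t k0 k' m θ)]
    rw [Finset.prod_const, Finset.card_univ, Fintype.card_fin]
    refine pow_le_pow_left₀ (Finset.sum_nonneg fun m _ =>
      integral_nonneg fun θ => factor_nonneg ..) ?_ s
    exact sum_integral_factor_le t k0 k' ht hk0 (Finset.mem_range.mp hlt) hne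
  have hcard : (K.card : ℝ) ≤ t := by
    have : K.card ≤ t := (Finset.card_le_card (Finset.erase_subset _ _)).trans_eq (by simp)
    exact_mod_cast this
  have hpi := Real.pi_pos
  refine (mul_le_mul_of_nonneg_left (Finset.sum_le_sum fun M _ => hM M) (by positivity)).trans ?_
  rw [Finset.sum_comm]
  refine (mul_le_mul_of_nonneg_left (Finset.sum_le_sum hk) (by positivity)).trans ?_
  rw [Finset.sum_const, nsmul_eq_mul, mul_left_comm, ← mul_pow, ← mul_pow]
  have he : 1 / ((t : ℝ) - 1) * (1 / (2 * Real.pi)) * (2 * Real.pi * ((t : ℝ) - 1) * (15 / 16))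
      = 15 / 16 := by
    field_simp
  rw [he]
  exact mul_le_mul_of_nonneg_right hcard (by positivity)
end

section
/- There exists a constant c with 0 < c < 1, independent of t, such that for every integer t ≥ 2 and all distinct k, k' ∈ {0,…,t−1}: (1/(t−1)) ∑_{M=1}^{t−1} (1/(2π)) ∫_0^{2π} [ √(P_{M,θ}(0|k)·P_{M,θ}(0|k')) + √(P_{M,θ}(1|k)·P_{M,θ}(1|k')) ] dθ ≤ c. -/
/-!
The constant is `c = 7/8`. For two-point distributions with biases `p = cos a` and `q = cos b`,
AM-GM applied to the cross term of the squared Bhattacharyya coefficient bounds the coefficient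
by `1 - (p - q)² / 8` (`bhattacharyya_le`). Averaging `(cos (A + θ) - cos (B + θ))²` over a full
period of `θ` gives `1 - cos (A - B)` (`integral_bound_eq`). Finally, with
`A - B = 2πM(k - k')/t`, the nontrivial `t`-th root of unity `exp (2πi(k - k')/t)` has vanishing
geometric sum, so `∑_{M=1}^{t-1} cos (A - B) = -1` (`sum_cos_eq`). The average over `M` and `θ` is
therefore at most `1 - t / (8(t - 1)) ≤ 7/8`.
-/

open MeasureTheory Finset
open scoped Classical

lemma bhattacharyya_le (p q : ℝ) (hp : p ∈ Set.Icc (-1 : ℝ) 1) (hq : q ∈ Set.Icc (-1 : ℝ) 1) :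
    Real.sqrt ((1 + p) / 2 * ((1 + q) / 2)) + Real.sqrt ((1 - p) / 2 * ((1 - q) / 2))
      ≤ 1 - (p - q) ^ 2 / 8 := by
  obtain ⟨hp1, hp2⟩ := hp
  obtain ⟨hq1, hq2⟩ := hq
  have hx : 0 ≤ (1 + p) / 2 * ((1 + q) / 2) := mul_nonneg (by linarith) (by linarith)
  have hy : 0 ≤ (1 - p) / 2 * ((1 - q) / 2) := mul_nonneg (by linarith) (by linarith)
  set u := Real.sqrt ((1 + p) / 2 * ((1 + q) / 2)) with hu
  set v := Real.sqrt ((1 - p) / 2 * ((1 - q) / 2)) with hv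
  have hu2 : u ^ 2 = (1 + p) / 2 * ((1 + q) / 2) := Real.sq_sqrt hx
  have hv2 : v ^ 2 = (1 - p) / 2 * ((1 - q) / 2) := Real.sq_sqrt hy
  have huv : u * v ≤ (2 - p ^ 2 - q ^ 2) / 8 := by
    apply abs_le_of_sq_le_sq' _ (by nlinarith) |>.2
    have h : (u * v) ^ 2 = (1 - p ^ 2) * (1 - q ^ 2) / 16 := by
      rw [mul_pow, hu2, hv2]; ring
    rw [h]
    nlinarith [sq_nonneg (p ^ 2 - q ^ 2)]
  have hsq : (u + v) ^ 2 ≤ 1 - (p - q) ^ 2 / 4 := by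
    have h : (u + v) ^ 2 = u ^ 2 + v ^ 2 + 2 * (u * v) := by ring
    rw [h, hu2, hv2]
    linarith
  nlinarith [sq_nonneg (u + v - 1)]

lemma integral_bound_eq (A B : ℝ) :
    ∫ θ in (0 : ℝ)..(2 * Real.pi), (1 - (Real.cos (A + θ) - Real.cos (B + θ)) ^ 2 / 8)
      = 2 * Real.pi * (7 / 8 + Real.cos (A - B) / 8) := by
  have key : ∀ x ∈ Set.uIcc (0 : ℝ) (2 * Real.pi), HasDerivAt
      (fun θ : ℝ => (7 / 8 + Real.cos (A - B) / 8) * θ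
        - (Real.sin (2 * (A + θ)) / 4 + Real.sin (2 * (B + θ)) / 4
          - Real.sin ((A + θ) + (B + θ)) / 2) / 8)
      (1 - (Real.cos (A + x) - Real.cos (B + x)) ^ 2 / 8) x := by
    intro x _
    have hA : HasDerivAt (fun θ : ℝ => A + θ) 1 x := (hasDerivAt_id x).const_add A
    have hB : HasDerivAt (fun θ : ℝ => B + θ) 1 x := (hasDerivAt_id x).const_add B
    have h := ((hasDerivAt_id x).const_mul (7 / 8 + Real.cos (A - B) / 8)).sub
      (((((hA.const_mul 2).sin.div_const 4).add ((hB.const_mul 2).sin.div_const 4)).sub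
        ((hA.add hB).sin.div_const 2)).div_const 8)
    refine h.congr_deriv ?_
    have e : A - B = (A + x) - (B + x) := by ring
    simp only [Pi.add_apply]
    rw [e, Real.cos_sub, Real.cos_two_mul, Real.cos_two_mul, Real.cos_add (A + x) (B + x)]
    ring
  rw [intervalIntegral.integral_eq_sub_of_hasDerivAt key
    (Continuous.intervalIntegrable (by fun_prop) _ _)]
  have e1 : ∀ C : ℝ, Real.sin (2 * (C + 2 * Real.pi)) = Real.sin (2 * C) := by
    intro C
    rw [← Real.sin_add_nat_mul_two_pi (2 * C) 2]
    congr 1; push_cast; ring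
  have e2 : Real.sin ((A + 2 * Real.pi) + (B + 2 * Real.pi)) = Real.sin (A + B) := by
    rw [← Real.sin_add_nat_mul_two_pi (A + B) 2]
    congr 1; push_cast; ring
  rw [e1, e1, e2]
  simp only [add_zero]
  ring

lemma integral_bhattacharyya_le (t M k k' : ℕ) :
    ∫ θ in Set.Ico (0 : ℝ) (2 * Real.pi),
      (Real.sqrt (measP t M θ false k * measP t M θ false k') +
        Real.sqrt (measP t M θ true k * measP t M θ true k'))
    ≤ 2 * Real.pi *
      (7 / 8 + Real.cos (2 * Real.pi * M * (k / t : ℝ) - 2 * Real.pi * M * (k' / t : ℝ)) / 8) := by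
  rw [integral_Ico_eq_integral_Ioc, ← intervalIntegral.integral_of_le (by positivity),
    ← integral_bound_eq]
  apply intervalIntegral.integral_mono_on (by positivity)
  · apply Continuous.intervalIntegrable
    simp only [measP, if_true, Bool.false_eq_true, if_false]
    fun_prop
  · exact Continuous.intervalIntegrable (by fun_prop) _ _
  · intro θ _
    simp only [measP, if_true, Bool.false_eq_true, if_false]
    exact bhattacharyya_le _ _ (Real.cos_mem_Icc _) (Real.cos_mem_Icc _)

lemma sum_cos_eq (t k k' : ℕ) (ht : 2 ≤ t) (hk : k < t) (hk' : k' < t) (hne : k ≠ k') :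
    ∑ M ∈ Finset.Icc 1 (t - 1),
      Real.cos (2 * Real.pi * M * (k / t : ℝ) - 2 * Real.pi * M * (k' / t : ℝ)) = -1 := by
  have ht0 : t ≠ 0 := by omega
  have htC : (t : ℂ) ≠ 0 := by exact_mod_cast ht0
  set x : ℝ := 2 * Real.pi * (k / t : ℝ) - 2 * Real.pi * (k' / t : ℝ) with hx
  set z : ℂ := Complex.exp (x * Complex.I) with hz
  have hzM : ∀ M : ℕ, (z ^ M).re
      = Real.cos (2 * Real.pi * M * (k / t : ℝ) - 2 * Real.pi * M * (k' / t : ℝ)) := by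
    intro M
    rw [hz, ← Complex.exp_nat_mul, ← Complex.exp_ofReal_mul_I_re]
    congr 2
    rw [hx]; push_cast; ring
  have hzt : z ^ t = 1 := by
    rw [hz, ← Complex.exp_nat_mul, Complex.exp_eq_one_iff]
    refine ⟨(k : ℤ) - k', ?_⟩
    rw [hx]; push_cast; field_simp
  have hz1 : z ≠ 1 := by
    intro h
    rw [hz, Complex.exp_eq_one_iff] at h
    obtain ⟨n, hn⟩ := h
    have h1 : (k : ℂ) - k' = n * t := by
      rw [hx] at hn
      push_cast at hn
      have hpi : (Real.pi : ℂ) ≠ 0 := by exact_mod_cast Real.pi_ne_zero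
      field_simp at hn
      linear_combination hn
    have h2 : (k : ℤ) - k' = n * t := by exact_mod_cast h1
    -- a multiple of `t` of absolute value below `t` vanishes
    have h3 : (k : ℤ) - k' = 0 := by
      apply Int.eq_zero_of_abs_lt_dvd (Dvd.intro_left n h2.symm)
      rw [abs_lt]; omega
    omega
  have hgeom : ∑ M ∈ Finset.range t, z ^ M = 0 := by
    rw [geom_sum_eq hz1, hzt]; simp
  have hre : ∑ M ∈ Finset.range t, (z ^ M).re = 0 := by
    rw [← Complex.re_sum, hgeom]; simp
  have hset : Finset.range t = insert 0 (Finset.Icc 1 (t - 1)) := by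
    ext a; simp only [Finset.mem_range, Finset.mem_insert, Finset.mem_Icc]; omega
  rw [hset, Finset.sum_insert (by simp)] at hre
  simp only [hzM] at hre
  simp at hre
  linarith

/-- There is a universal constant `0 < c < 1` such that for every `t ≥ 2` and all distinct
`k, k' < t`, the Bhattacharyya coefficient between the outcome distributions for `k` and `k'`,
averaged over a uniformly random multiple `M ∈ {1,…,t-1}` and a uniformly random angle
`θ ∈ [0,2π)`, is at most `c`. -/
theorem averaged_bhattacharyya_bound :
    ∃ c : ℝ, 0 < c ∧ c < 1 ∧
      ∀ t : ℕ, 2 ≤ t → ∀ k k' : ℕ, k < t → k' < t → k ≠ k' →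
        (1 / ((t : ℝ) - 1)) *
            ∑ M ∈ Finset.Icc 1 (t - 1),
              (1 / (2 * Real.pi)) *
                ∫ θ in Set.Ico (0 : ℝ) (2 * Real.pi),
                  (Real.sqrt (measP t M θ false k * measP t M θ false k') +
                    Real.sqrt (measP t M θ true k * measP t M θ true k'))
          ≤ c := by
  refine ⟨7 / 8, by norm_num, by norm_num, ?_⟩
  intro t ht k k' hk hk' hne
  have ht1 : (0 : ℝ) < (t : ℝ) - 1 := by
    have : (2 : ℝ) ≤ t := by exact_mod_cast ht
    linarith
  have hsum : ∑ M ∈ Finset.Icc 1 (t - 1),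
      (1 / (2 * Real.pi)) *
        ∫ θ in Set.Ico (0 : ℝ) (2 * Real.pi),
          (Real.sqrt (measP t M θ false k * measP t M θ false k') +
            Real.sqrt (measP t M θ true k * measP t M θ true k'))
      ≤ ∑ M ∈ Finset.Icc 1 (t - 1), (7 / 8 +
          Real.cos (2 * Real.pi * M * (k / t : ℝ) - 2 * Real.pi * M * (k' / t : ℝ)) / 8) := by
    apply Finset.sum_le_sum
    intro M _
    rw [one_div, inv_mul_le_iff₀ (by positivity)]
    exact integral_bhattacharyya_le t M k k'
  rw [Finset.sum_add_distrib, Finset.sum_const, ← Finset.sum_div,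
    sum_cos_eq t k k' ht hk hk' hne, Nat.card_Icc, nsmul_eq_mul, Nat.add_sub_cancel,
    Nat.cast_sub (by omega : 1 ≤ t), Nat.cast_one] at hsum
  rw [one_div, inv_mul_le_iff₀ ht1]
  linarith
end

section
/- There exists a constant c with 0 < c < 1, independent of t, such that for every integer t ≥ 2 and all distinct k, k' ∈ {0,…,t−1}: (1/(t−1)) ∑_{M=1}^{t−1} (1/2) ∑_{θ ∈ {0, π/2}} [ √(P_{M,θ}(0|k)·P_{M,θ}(0|k')) + √(P_{M,θ}(1|k)·P_{M,θ}(1|k')) ] ≤ c. That is, the bound on the averaged Bhattacharyya coefficient continues to hold when the angle θ is chosen uniformly from the two-element set {0, π/2} instead of uniformly from [0,2π). -/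
/-!
With `a = 2πMk/t`, `b = 2πMk'/t`, put `x = cos a cos b` and `y = sin a sin b`. The squared
Bhattacharyya coefficients for the angles `0` and `π/2` are `(1 + x + |y|)/2` and
`(1 + y + |x|)/2`. Bounding each coefficient `B` by `(1 + B²)/2` and using `|x| + |y| ≤ 1`, the
mean over the two angles is at most `7/8 + cos (a - b)/8` (`two_angle_bound`), which is affine in
`cos (a - b)`. Since `k ≠ k'`, the sum of `cos (2πM(k - k')/t)` over `M = 1, …, t - 1` is `-1`
(`sum_cos_eq_neg_one`), so `c = 7/8` works.
-/

open Finset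
open scoped Classical

/-- The condition `uv = (y/4)²` gives `(√u + √v)² = u + v + |y|/2`; AM-GM against `1` then bounds
`√u + √v` by an expression free of square roots. -/
lemma sqrt_add_sqrt_le {u v y : ℝ} (hu : 0 ≤ u) (hv : 0 ≤ v) (h : u * v = (y / 4) ^ 2) :
    √u + √v ≤ (1 + (u + v + |y| / 2)) / 2 := by
  have h1 : √u * √v = |y| / 4 := by
    rw [← Real.sqrt_mul hu, h, Real.sqrt_sq_eq_abs, abs_div]
    norm_num
  nlinarith [sq_nonneg (√u + √v - 1), Real.sq_sqrt hu, Real.sq_sqrt hv]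

lemma abs_cos_mul_cos_add_abs_sin_mul_sin_le (a b : ℝ) :
    |Real.cos a * Real.cos b| + |Real.sin a * Real.sin b| ≤ 1 := by
  rw [abs_mul, abs_mul]
  nlinarith [sq_nonneg (|Real.cos a| - |Real.cos b|), sq_nonneg (|Real.sin a| - |Real.sin b|),
    sq_abs (Real.cos a), sq_abs (Real.cos b), sq_abs (Real.sin a), sq_abs (Real.sin b),
    Real.sin_sq_add_cos_sq a, Real.sin_sq_add_cos_sq b]

/-- Bound on the Bhattacharyya coefficient of the two-point distributions `(1 ± p)/2` and
`(1 ± q)/2`, where `p, q` play the role of cosines and `p', q'` that of the matching sines. -/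
lemma coefficient_le {p q p' q' : ℝ} (hp : p' ^ 2 + p ^ 2 = 1) (hq : q' ^ 2 + q ^ 2 = 1) :
    √((1 + p) / 2 * ((1 + q) / 2)) + √((1 - p) / 2 * ((1 - q) / 2)) ≤
      3 / 4 + (p * q + |p' * q'|) / 4 := by
  have h1 : |p| ≤ 1 := abs_le_one_iff_mul_self_le_one.2 (by nlinarith [sq_nonneg p'])
  have h2 : |q| ≤ 1 := abs_le_one_iff_mul_self_le_one.2 (by nlinarith [sq_nonneg q'])
  rw [abs_le] at h1 h2
  refine (sqrt_add_sqrt_le (y := p' * q') ?_ ?_ ?_).trans (le_of_eq (by ring))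
  · exact mul_nonneg (by linarith) (by linarith)
  · exact mul_nonneg (by linarith) (by linarith)
  · have e1 : p' ^ 2 = 1 - p ^ 2 := by linarith
    have e2 : q' ^ 2 = 1 - q ^ 2 := by linarith
    rw [div_pow, mul_pow, e1, e2]
    ring

lemma two_angle_bound (t M k k' : ℕ) :
    (1 / 2) *
      ((Real.sqrt (measP t M 0 false k * measP t M 0 false k') +
          Real.sqrt (measP t M 0 true k * measP t M 0 true k')) +
        (Real.sqrt (measP t M (Real.pi / 2) false k * measP t M (Real.pi / 2) false k') +
          Real.sqrt (measP t M (Real.pi / 2) true k * measP t M (Real.pi / 2) true k'))) ≤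
      7 / 8 + Real.cos (M * (2 * Real.pi * ((k : ℝ) - k') / t)) / 8 := by
  have hd : (M : ℝ) * (2 * Real.pi * ((k : ℝ) - k') / t) =
      2 * Real.pi * M * (k / t : ℝ) - 2 * Real.pi * M * (k' / t : ℝ) := by ring
  rw [hd]
  simp only [measP, Bool.false_eq_true, if_true, if_false, add_zero, Real.cos_add_pi_div_two]
  generalize 2 * Real.pi * M * (k / t : ℝ) = a
  generalize 2 * Real.pi * M * (k' / t : ℝ) = b
  have h0 := coefficient_le (Real.sin_sq_add_cos_sq a) (Real.sin_sq_add_cos_sq b)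
  have h1 := coefficient_le (p := -Real.sin a) (q := -Real.sin b) (p' := Real.cos a)
    (q' := Real.cos b) (by rw [neg_sq, Real.cos_sq_add_sin_sq])
    (by rw [neg_sq, Real.cos_sq_add_sin_sq])
  have h2 := abs_cos_mul_cos_add_abs_sin_mul_sin_le a b
  rw [neg_mul_neg] at h1
  rw [Real.cos_sub]
  linarith

/-- The telescoping identity for the Dirichlet kernel. -/
lemma two_sin_mul_sum_cos (h : ℝ) (m : ℕ) :
    2 * Real.sin (h / 2) * ∑ M ∈ Finset.Icc 1 m, Real.cos (M * h) =
      Real.sin (m * h + h / 2) - Real.sin (h / 2) := by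
  induction m with
  | zero => simp
  | succ m ih =>
    rw [Finset.sum_Icc_succ_top (by omega), mul_add, ih]
    have e : (m : ℝ) * h + h / 2 = ((m + 1 : ℕ) : ℝ) * h - h / 2 := by push_cast; ring
    rw [e, Real.sin_sub, Real.sin_add]
    ring

lemma sum_cos_eq_neg_one {t k k' : ℕ} (hk : k < t) (hk' : k' < t) (hne : k ≠ k') :
    ∑ M ∈ Finset.Icc 1 (t - 1), Real.cos (M * (2 * Real.pi * ((k : ℝ) - k') / t)) = -1 := by
  have ht : (0 : ℝ) < t := by exact_mod_cast (by omega : 0 < t)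
  have key := two_sin_mul_sum_cos (2 * Real.pi * ((k : ℝ) - k') / t) (t - 1)
  set h := 2 * Real.pi * ((k : ℝ) - k') / t with hh
  have hkt : (k : ℝ) < t := by exact_mod_cast hk
  have hkt' : (k' : ℝ) < t := by exact_mod_cast hk'
  have hk0 : (0 : ℝ) ≤ k := by positivity
  have hk0' : (0 : ℝ) ≤ k' := by positivity
  have hsub : (k : ℝ) - k' ≠ 0 := sub_ne_zero.2 (by exact_mod_cast hne)
  have hhalf : h / 2 = Real.pi * (((k : ℝ) - k') / t) := by rw [hh]; ring
  -- `h / 2` lies in `(-π, π)` and is nonzero.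
  have hsin : Real.sin (h / 2) ≠ 0 := by
    have l1 : -1 < ((k : ℝ) - k') / t := by rw [lt_div_iff₀ ht]; linarith
    have l2 : ((k : ℝ) - k') / t < 1 := by rw [div_lt_iff₀ ht]; linarith
    rw [Ne, Real.sin_eq_zero_iff_of_lt_of_lt (by rw [hhalf]; nlinarith [Real.pi_pos])
      (by rw [hhalf]; nlinarith [Real.pi_pos]), hhalf]
    exact mul_ne_zero Real.pi_ne_zero (div_ne_zero hsub ht.ne')
  have hend : ((t - 1 : ℕ) : ℝ) * h + h / 2 =
      -(h / 2) + (((k : ℤ) - (k' : ℤ) : ℤ) : ℝ) * (2 * Real.pi) := by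
    rw [Nat.cast_sub (by omega), hh]
    push_cast
    field_simp
    ring
  rw [hend, Real.sin_add_int_mul_two_pi, Real.sin_neg] at key
  apply mul_left_cancel₀ (mul_ne_zero two_ne_zero hsin)
  linarith

/-- There is a universal constant `0 < c < 1` such that for every `t ≥ 2` and all distinct
`k, k' < t`, the Bhattacharyya coefficient between the outcome distributions for `k` and `k'`,
averaged over a uniformly random multiple `M ∈ {1,…,t-1}` and an angle `θ` chosen uniformly
from the two-element set `{0, π/2}`, is at most `c`. -/
theorem averaged_bhattacharyya_bound_two_angles :
    ∃ c : ℝ, 0 < c ∧ c < 1 ∧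
      ∀ t : ℕ, 2 ≤ t → ∀ k k' : ℕ, k < t → k' < t → k ≠ k' →
        (1 / ((t : ℝ) - 1)) *
            ∑ M ∈ Finset.Icc 1 (t - 1),
              (1 / 2) *
                ((Real.sqrt (measP t M 0 false k * measP t M 0 false k') +
                    Real.sqrt (measP t M 0 true k * measP t M 0 true k')) +
                  (Real.sqrt (measP t M (Real.pi / 2) false k * measP t M (Real.pi / 2) false k') +
                    Real.sqrt (measP t M (Real.pi / 2) true k * measP t M (Real.pi / 2) true k')))
          ≤ c := by
  refine ⟨7 / 8, by norm_num, by norm_num, fun t ht k k' hk hk' hne => ?_⟩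
  have ht' : (0 : ℝ) < (t : ℝ) - 1 := by
    have : (2 : ℝ) ≤ t := by exact_mod_cast ht
    linarith
  have hsum := Finset.sum_le_sum fun M (_ : M ∈ Finset.Icc 1 (t - 1)) => two_angle_bound t M k k'
  rw [Finset.sum_add_distrib, Finset.sum_const, ← Finset.sum_div, sum_cos_eq_neg_one hk hk' hne,
    Nat.card_Icc, nsmul_eq_mul, Nat.add_sub_cancel, Nat.cast_sub (by omega), Nat.cast_one] at hsum
  rw [one_div, inv_mul_le_iff₀ ht']
  linarith
end

section
/- Let m ≥ 1 be an integer, let φ ∈ ℝ, and suppose that for each j ∈ {1,…,m} a real number ρ_j is given with ‖ρ_j − 2^{j−1}·φ‖ < 1/16. Let α_m, α_{m+1}, α_{m+2} ∈ {0,1} be the binary digits of a multiple β_m = (α_m/2 + α_{m+1}/4 + α_{m+2}/8) of 1/8 minimizing ‖β_m − ρ_m‖. Then for each j = m−1, m−2, …, 1 there exists a unique bit α_j ∈ {0,1} such that ‖α_j/2 + α_{j+1}/4 + α_{j+2}/8 − ρ_j‖ < 1/4, and with the bits so determined, the number α = ∑_{p=1}^{m+2} α_p·2^{−p} satisfies ‖α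 − φ‖ < 2^{−(m+2)}. -/
/-!
The theorem follows by induction on the number `m` of estimates, passing from `m` to `m + 1` by
prepending a bit: the shifted data `ρ (j + 1)` are estimates for the phase `2φ`, so bits with
fraction `S'` satisfying `‖S' - 2φ‖ < 2^{-(m+2)}` are already available. Writing `S' = 2φ + n + e`
with `n` an integer and `|e| < 2^{-(m+2)}`, the new leading bit is the parity `b` of `n`, since then
`b/2 + S'/2 - φ` is an integer plus `e/2`; this halves the error.

This `b` also passes the test against `ρ 1`: the three leading bits of the new fraction differ from
it by less than `1/8` (`sum_tail_bounds`), the new fraction differs from `φ` by less than `1/16`,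
and `φ` from `ρ 1` by less than `1/16`, for a total below `1/4`. Only one bit can pass, because the
two candidates are `1/2` apart modulo 1 (`bit_unique`). In the base case `m = 1`, the multiple of
`1/8` closest to `ρ 1` is within `1/16` of it, hence within `1/8` of `φ`.
-/

open Finset

/-- `distMod1 x` is the distance from `x` to the nearest integer (distance mod 1). -/
noncomputable def distMod1 (x : ℝ) : ℝ := |x - round x|

lemma distMod1_le (x : ℝ) (n : ℤ) : distMod1 x ≤ |x - n| := round_le x n

lemma exists_of_distMod1_lt {x c : ℝ} (h : distMod1 x < c) : ∃ n : ℤ, |x - n| < c :=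
  ⟨round x, h⟩

lemma distMod1_lt_of {x c : ℝ} (n : ℤ) (h : |x - n| < c) : distMod1 x < c :=
  (distMod1_le x n).trans_lt h

lemma sum_Icc_one_succ (f : ℕ → ℝ) (n : ℕ) :
    ∑ p ∈ Icc 1 (n + 1), f p = f 1 + ∑ p ∈ Icc 1 n, f (p + 1) := by
  induction n with
  | zero => simp
  | succ n ih =>
    rw [sum_Icc_succ_top (by omega), ih, sum_Icc_succ_top (by omega)]
    ring

lemma bit_le_one (b : Fin 2) : (b.val : ℝ) ≤ 1 := by
  exact_mod_cast Nat.lt_succ_iff.mp b.isLt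

/-- The digits of a binary fraction from the third one on contribute an amount in `[0, 1/4)`. -/
lemma sum_tail_bounds (α : ℕ → Fin 2) (k : ℕ) :
    ((α 1).val : ℝ) / 2 + (α 2).val / 4
        ≤ ∑ p ∈ Icc 1 (k + 2), ((α p).val : ℝ) * (2 : ℝ) ^ (-(p : ℤ)) ∧
      ∑ p ∈ Icc 1 (k + 2), ((α p).val : ℝ) * (2 : ℝ) ^ (-(p : ℤ))
        ≤ ((α 1).val : ℝ) / 2 + (α 2).val / 4 + 1 / 4 - (2 : ℝ) ^ (-((k : ℤ) + 2)) := by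
  induction k with
  | zero =>
    rw [sum_Icc_succ_top (by omega), sum_Icc_succ_top (by omega)]
    norm_num [zpow_neg]
    constructor <;> linarith
  | succ k ih =>
    rw [show k + 1 + 2 = (k + 2) + 1 from rfl, sum_Icc_succ_top (by omega)]
    have h2 : (2 : ℝ) ^ (-((k : ℤ) + 2)) = 2 * (2 : ℝ) ^ (-(((k + 2 + 1 : ℕ)) : ℤ)) := by
      rw [← zpow_one_add₀ (by norm_num)]
      congr 1
    have h3 : (-(((k + 1 : ℕ) : ℤ) + 2)) = -(((k + 2 + 1 : ℕ)) : ℤ) := by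
      push_cast
      ring
    rw [h3]
    rw [h2] at ih
    have hpos : (0 : ℝ) < (2 : ℝ) ^ (-(((k + 2 + 1 : ℕ)) : ℤ)) := by positivity
    have hb0 : (0 : ℝ) ≤ (α (k + 2 + 1)).val := Nat.cast_nonneg _
    have hb1 := bit_le_one (α (k + 2 + 1))
    constructor
    · nlinarith [ih.1]
    · nlinarith [ih.2]

lemma not_both_bits {t : ℝ} (h0 : distMod1 t < 1 / 4) (h1 : distMod1 (1 / 2 + t) < 1 / 4) :
    False := by
  obtain ⟨n, hn⟩ := exists_of_distMod1_lt h0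
  obtain ⟨k, hk⟩ := exists_of_distMod1_lt h1
  rw [abs_lt] at hn hk
  have a : ((0 : ℤ) : ℝ) < ((k - n : ℤ) : ℝ) := by
    push_cast
    linarith
  have b : ((k - n : ℤ) : ℝ) < ((1 : ℤ) : ℝ) := by
    push_cast
    linarith
  have a' := Int.cast_lt.mp a
  have b' := Int.cast_lt.mp b
  omega

/-- The two candidate bits give values at distance `1/2` modulo 1, so at most one is within `1/4`
of a given point. -/
lemma bit_unique (x y z : ℝ) (b c : Fin 2)
    (hb : distMod1 ((b.val : ℝ) / 2 + x + y - z) < 1 / 4)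
    (hc : distMod1 ((c.val : ℝ) / 2 + x + y - z) < 1 / 4) : b = c := by
  have key : ∀ u : Fin 2, u.val = 0 ∨ u.val = 1 := fun u => by omega
  rcases key b with h | h <;> rcases key c with h' | h' <;>
    first
    | (apply Fin.ext; omega)
    | skip
  · exfalso
    rw [h] at hb
    rw [h'] at hc
    refine not_both_bits (t := x + y - z) ?_ ?_
    · convert hb using 2
      push_cast
      ring
    · convert hc using 2
      push_cast
      ring
  · exfalso
    rw [h] at hb
    rw [h'] at hc
    refine not_both_bits (t := x + y - z) ?_ ?_
    · convert hc using 2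
      push_cast
      ring
    · convert hb using 2
      push_cast
      ring

/-- Modulo 1, every real is within `1/16` of some `l/8` with `0 ≤ l < 8`. -/
lemma exists_eighth_close (r : ℝ) : ∃ l : ℕ, l < 8 ∧ distMod1 ((l : ℝ) / 8 - r) ≤ 1 / 16 := by
  set k : ℤ := round (8 * r) with hk
  refine ⟨(k % 8).toNat, by omega, ?_⟩
  have hl : (((k % 8).toNat : ℕ) : ℤ) = k - 8 * (k / 8) := by omega
  have hl' : (((k % 8).toNat : ℕ) : ℝ) = (k : ℝ) - 8 * ((k / 8 : ℤ) : ℝ) := by exact_mod_cast hl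
  refine (distMod1_le _ (-(k / 8))).trans ?_
  have h := abs_sub_round (8 * r)
  rw [← hk, abs_le] at h
  rw [hl', abs_le]
  push_cast
  constructor <;> linarith

/-- Halving a congruence modulo 1: the parity of the integer part supplies the new leading bit. -/
lemma exists_halving_bit {S φ d : ℝ} (h : distMod1 (S - 2 * φ) < d) :
    ∃ (b : Fin 2) (q : ℤ), |(b.val : ℝ) / 2 + S / 2 - φ - q| < d / 2 := by
  obtain ⟨n, hn⟩ := exists_of_distMod1_lt h
  -- `b = n mod 2`, so `(b + n) / 2` is the integer `b + ⌊n / 2⌋`.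
  refine ⟨⟨(n % 2).toNat, by omega⟩, n % 2 + n / 2, ?_⟩
  have h1 : (((n % 2).toNat : ℕ) : ℤ) = n % 2 := by omega
  have h1' : (((n % 2).toNat : ℕ) : ℝ) = ((n % 2 : ℤ) : ℝ) := by exact_mod_cast h1
  have h2 : n % 2 + 2 * (n / 2) = n := Int.emod_add_mul_ediv n 2
  have h2' : ((n % 2 : ℤ) : ℝ) + 2 * ((n / 2 : ℤ) : ℝ) = n := by exact_mod_cast h2
  rw [abs_lt] at hn ⊢
  simp only [h1']
  push_cast
  constructor <;> linarith

/-- Correctness of the bit-by-bit inference step of Kitaev's phase estimation algorithm.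
Given estimates `ρ_j` of `2^{j-1}·φ` mod 1 accurate to within `1/16` for `j = 1,…,m`, and
bits `b₁ b₂ b₃` such that `β_m = b₁/2 + b₂/4 + b₃/8` is a multiple of `1/8` closest to
`ρ_m` mod 1, there is an assignment of bits `α_1,…,α_{m+2}` with `α_m = b₁`,
`α_{m+1} = b₂`, `α_{m+2} = b₃` such that for each `j = m-1,…,1` the bit `α_j` is the
unique bit with `‖α_j/2 + α_{j+1}/4 + α_{j+2}/8 - ρ_j‖ < 1/4`, and the resulting binary
fraction `α = ∑_{p=1}^{m+2} α_p 2^{-p}` satisfies `‖α - φ‖ < 2^{-(m+2)}`. -/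
theorem kitaev_inference (m : ℕ) (hm : 1 ≤ m) (φ : ℝ) (ρ : ℕ → ℝ)
    (hρ : ∀ j, 1 ≤ j → j ≤ m → distMod1 (ρ j - 2 ^ (j - 1) * φ) < 1 / 16)
    (b₁ b₂ b₃ : Fin 2)
    (hmin : ∀ l : ℕ, l < 8 →
      distMod1 ((b₁.val : ℝ) / 2 + (b₂.val : ℝ) / 4 + (b₃.val : ℝ) / 8 - ρ m) ≤
        distMod1 ((l : ℝ) / 8 - ρ m)) :
    ∃ α : ℕ → Fin 2,
      α m = b₁ ∧ α (m + 1) = b₂ ∧ α (m + 2) = b₃ ∧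
      (∀ j, 1 ≤ j → j < m →
        (∃! b : Fin 2,
          distMod1 ((b.val : ℝ) / 2 + (α (j + 1)).val / 4 + (α (j + 2)).val / 8 - ρ j)
            < 1 / 4) ∧
        distMod1 (((α j).val : ℝ) / 2 + (α (j + 1)).val / 4 + (α (j + 2)).val / 8 - ρ j)
          < 1 / 4) ∧
      distMod1 ((∑ p ∈ Finset.Icc 1 (m + 2), ((α p).val : ℝ) * (2 : ℝ) ^ (-(p : ℤ))) - φ)
        < (2 : ℝ) ^ (-((m : ℤ) + 2)) := by
  induction m, hm using Nat.le_induction generalizing φ ρ with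
  | base =>
    refine ⟨fun n => if n = 1 then b₁ else if n = 2 then b₂ else b₃, by simp, by simp, by simp,
      fun j h1 h2 => by omega, ?_⟩
    obtain ⟨l, hl, hl'⟩ := exists_eighth_close (ρ 1)
    obtain ⟨n, hn⟩ := exists_of_distMod1_lt (hρ 1 le_rfl le_rfl)
    have hβ : |_ - ((round _ : ℤ) : ℝ)| ≤ 1 / 16 := (hmin l hl).trans hl'
    rw [sum_Icc_succ_top (by omega), sum_Icc_succ_top (by omega), sum_Icc_succ_top (by omega)]
    refine distMod1_lt_of (round ((b₁.val : ℝ) / 2 + (b₂.val : ℝ) / 4 + (b₃.val : ℝ) / 8 - ρ 1) + n)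
      ?_
    rw [abs_le] at hβ
    rw [abs_lt] at hn ⊢
    norm_num [zpow_neg] at hn hβ ⊢
    constructor <;> linarith [hn.1, hn.2, hβ.1, hβ.2]
  | succ m hm ih =>
    obtain ⟨α', e1, e2, e3, hbits, hsum⟩ := ih (2 * φ) (fun j => ρ (j + 1)) (fun j h1 h2 => by
      have h := hρ (j + 1) (by omega) (by omega)
      obtain ⟨i, rfl⟩ : ∃ i, j = i + 1 := ⟨j - 1, by omega⟩
      convert h using 2
      simp only [Nat.add_sub_cancel]
      ring) hmin
    obtain ⟨b, q, hq⟩ := exists_halving_bit hsum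
    have htail := sum_tail_bounds α' m
    have hpos : (0 : ℝ) < (2 : ℝ) ^ (-((m : ℤ) + 2)) := by positivity
    have hsmall : (2 : ℝ) ^ (-((m : ℤ) + 2)) ≤ 1 / 8 := by
      calc (2 : ℝ) ^ (-((m : ℤ) + 2)) ≤ (2 : ℝ) ^ (-3 : ℤ) :=
            zpow_le_zpow_right₀ (by norm_num) (by omega)
        _ = 1 / 8 := by norm_num [zpow_neg]
    have hhalf : (2 : ℝ) ^ (-(((m + 1 : ℕ) : ℤ) + 2)) = (2 : ℝ) ^ (-((m : ℤ) + 2)) / 2 := by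
      rw [div_eq_mul_inv, ← zpow_sub_one₀ (by norm_num)]
      congr 1
    set S := ∑ p ∈ Icc 1 (m + 2), ((α' p).val : ℝ) * (2 : ℝ) ^ (-(p : ℤ)) with hS
    have hfirst : distMod1 ((b.val : ℝ) / 2 + (α' 1).val / 4 + (α' 2).val / 8 - ρ 1) < 1 / 4 := by
      obtain ⟨n, hn⟩ := exists_of_distMod1_lt (hρ 1 le_rfl (by omega))
      refine distMod1_lt_of (q - n) ?_
      rw [abs_lt] at hn hq ⊢
      norm_num at hn ⊢
      constructor <;> linarith [hn.1, hn.2, hq.1, hq.2, htail.1, htail.2]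
    -- The value at index `0` is irrelevant.
    refine ⟨fun n => if n = 1 then b else α' (n - 1), ?_, ?_, ?_, ?_, ?_⟩
    · simpa [show m ≠ 0 by omega] using e1
    · simpa using e2
    · simpa using e3
    · intro j h1 h2
      obtain rfl | ⟨i, rfl⟩ : j = 1 ∨ ∃ i, j = i + 1 + 1 := by
        rcases Nat.lt_or_ge 1 j with h | h
        · exact Or.inr ⟨j - 2, by omega⟩
        · exact Or.inl (by omega)
      · exact ⟨⟨b, hfirst, fun c hc => bit_unique _ _ _ _ _ hc hfirst⟩, hfirst⟩
      · simpa using hbits (i + 1) (by omega) (by omega)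
    · rw [hhalf, show m + 1 + 2 = (m + 2) + 1 from rfl, sum_Icc_one_succ]
      refine distMod1_lt_of q ?_
      convert hq using 3
      congr 1
      congr 1
      · norm_num [zpow_neg]
        ring
      · rw [hS, sum_div]
        refine sum_congr rfl fun p hp => ?_
        have hp1 : p ≠ 0 := by
          have := (mem_Icc.mp hp).1
          omega
        have hz : (2 : ℝ) ^ (-((p + 1 : ℕ) : ℤ)) = (2 : ℝ) ^ (-(p : ℤ)) / 2 := by
          rw [div_eq_mul_inv, ← zpow_sub_one₀ (by norm_num)]
          congr 1
          omega
        rw [hz]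
        simp [hp1]
        ring
end

section
/- Let φ, φ' ∈ ℝ and δ ≥ 0. If |cos(2πφ) − cos(2πφ')| ≤ δ and |sin(2πφ) − sin(2πφ')| ≤ δ, then ‖φ − φ'‖ ≤ (√2/4)·δ. -/
/-- The squared chord–arc inequality `16 ‖x‖² ≤ |e^{2πix} - 1|²`, with the squared chord written
as `2 - 2 cos (2πx)`. -/
lemma sixteen_mul_distMod1_sq_le (x : ℝ) :
    16 * distMod1 x ^ 2 ≤ 2 - 2 * Real.cos (2 * Real.pi * x) := by
  have hpi := Real.pi_pos
  have habs : |2 * Real.pi * (x - round x)| ≤ Real.pi := by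
    rw [abs_mul, abs_of_pos (by positivity : 0 < 2 * Real.pi)]
    nlinarith [abs_sub_round x]
  have hbound := Real.cos_le_one_sub_mul_cos_sq habs
  have hperiod : Real.cos (2 * Real.pi * (x - round x)) = Real.cos (2 * Real.pi * x) := by
    rw [← Real.cos_sub_int_mul_two_pi (2 * Real.pi * x) (round x)]
    congr 1
    ring
  have hquad : 2 / Real.pi ^ 2 * (2 * Real.pi * (x - round x)) ^ 2 = 8 * (x - round x) ^ 2 := by
    field_simp
    ring
  rw [hperiod, hquad] at hbound
  rw [distMod1, sq_abs]
  linarith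

/-- If the cosine and sine of `2πφ` and `2πφ'` each agree to within `δ`, then `φ` and `φ'`
agree mod 1 to within `(√2/4)·δ`. -/
theorem cos_sin_close_imp_phase_close (φ φ' δ : ℝ) (hδ : 0 ≤ δ)
    (hcos : |Real.cos (2 * Real.pi * φ) - Real.cos (2 * Real.pi * φ')| ≤ δ)
    (hsin : |Real.sin (2 * Real.pi * φ) - Real.sin (2 * Real.pi * φ')| ≤ δ) :
    distMod1 (φ - φ') ≤ Real.sqrt 2 / 4 * δ := by
  -- The squared chord is at most `2δ²`, so `16 ‖φ - φ'‖² ≤ 2δ²`.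
  have hchord := sixteen_mul_distMod1_sq_le (φ - φ')
  rw [mul_sub, Real.cos_sub] at hchord
  have hc := sq_le_sq' (abs_le.mp hcos).1 (abs_le.mp hcos).2
  have hs := sq_le_sq' (abs_le.mp hsin).1 (abs_le.mp hsin).2
  have h1 := Real.sin_sq_add_cos_sq (2 * Real.pi * φ)
  have h2 := Real.sin_sq_add_cos_sq (2 * Real.pi * φ')
  refine le_of_abs_le (abs_le_of_sq_le_sq ?_ (by positivity))
  rw [mul_pow, div_pow, Real.sq_sqrt (by norm_num)]
  nlinarith
end

section
/- There exists a constant c with 0 < c < 1, independent of t, such that for every integer t ≥ 2, every k0 ∈ {0,…,t−1}, every ε > 0, and every integer s with s ≥ log(t/ε)/log(1/c), the following holds. Suppose s independent basic measurements are performed, where for each i the multiple M_i is chosen uniformly at random from {1,…,t−1}, the angle θ_i is chosen uniformly at random from [0,2π), and the outcome v_i ∈ {0,1} is distributed with probabilities P_{M_i,θ_i}(v_i | k0). Then the probability that there exists k' ≠ k0 with ∏_{i=1}^s P_{M_i,θ_i}(v_i | k') ≥ ∏_{i=1}^s P_{M_i,θ_i}(v_i | k0) is at most ε. In other words, log_{1/c}(t/ε)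 measurements suffice to identify the phase k0/t among t equally spaced candidates with error probability at most ε. -/
/-!
The proof is the Chernoff (Bhattacharyya) bound with exponent `1/2`. If `P(v|k') ≥ P(v|k0)` then
`P(v|k0) ≤ √(P(v|k0) P(v|k'))`, so by the union bound the error probability is at most the sum over
`k' ≠ k0` of the expected Bhattacharyya coefficient of `s` measurements, and this factorizes as the
`s`-th power of the coefficient of one measurement.

With `a`, `b` the two phases `2πMk/t + θ`, `2πMk'/t + θ`, one measurement has coefficient at most
`1 - (cos a - cos b)² / 16` (`sum_sqrt_measP_le`). Averaging over `θ` turns `(cos a - cos b)²` into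
`1 - cos (2πM(k0 - k')/t)` (`integral_one_sub_cos_sub_cos_sq`), and averaging over `M` turns this
into `1 + 1/(t - 1) ≥ 1` (`sum_cos_phase_diff`). So each measurement contributes a factor of at most
`c = 15/16` (`average_bhatt_le`), and the error probability is at most `(t - 1) c ^ s ≤ ε`.
-/

open MeasureTheory Finset
open scoped Classical

/-- A quantitative AM-GM inequality: the gap `(√x - √y)² / 2` equals `(x - y)² / (2 (√x + √y)²)`,
and `√x + √y ≤ 2`. -/
lemma sqrt_mul_le_mean_sub (x y : ℝ) (hx : 0 ≤ x) (hy : 0 ≤ y) (hx1 : x ≤ 1) (hy1 : y ≤ 1) :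
    √(x * y) ≤ (x + y) / 2 - (x - y) ^ 2 / 8 := by
  rw [Real.sqrt_mul hx]
  obtain ⟨a, ha, rfl⟩ : ∃ a, 0 ≤ a ∧ x = a ^ 2 := ⟨√x, Real.sqrt_nonneg x, (Real.sq_sqrt hx).symm⟩
  obtain ⟨b, hb, rfl⟩ : ∃ b, 0 ≤ b ∧ y = b ^ 2 := ⟨√y, Real.sqrt_nonneg y, (Real.sq_sqrt hy).symm⟩
  rw [Real.sqrt_sq ha, Real.sqrt_sq hb]
  have h1 : a ≤ 1 := by nlinarith
  have h2 : b ≤ 1 := by nlinarith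
  have h3 : (a + b) ^ 2 ≤ 4 := by nlinarith
  nlinarith [mul_nonneg (sq_nonneg (a - b)) (sub_nonneg.2 h3)]

/-- The oscillating part of the integrand has frequency `2` in `θ`, so it integrates to `0`
and only the constant term survives. -/
lemma integral_one_sub_cos_sub_cos_sq (A B : ℝ) :
    ∫ θ in Set.Ico (0 : ℝ) (2 * Real.pi), (1 - (Real.cos (A + θ) - Real.cos (B + θ)) ^ 2 / 16) =
      2 * Real.pi * (1 - (1 - Real.cos (A - B)) / 16) := by
  have h0 (C : ℝ) : ∫ θ in (0 : ℝ)..(2 * Real.pi), Real.cos (2 * θ + C) = 0 := by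
    rw [intervalIntegral.integral_comp_mul_add _ two_ne_zero, integral_cos]
    have : 2 * (2 * Real.pi) + C = C + (2 : ℕ) * (2 * Real.pi) := by push_cast; ring
    rw [this, Real.sin_add_nat_mul_two_pi]; simp
  have hi (C : ℝ) : IntervalIntegrable (fun θ => Real.cos (2 * θ + C)) volume 0 (2 * Real.pi) :=
    Continuous.intervalIntegrable (by fun_prop) _ _
  have he : ∀ θ : ℝ, 1 - (Real.cos (A + θ) - Real.cos (B + θ)) ^ 2 / 16 =
      (1 - (1 - Real.cos (A - B)) / 16) + (-(1 / 32) * Real.cos (2 * θ + 2 * A)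
        + (-(1 / 32) * Real.cos (2 * θ + 2 * B) + 1 / 16 * Real.cos (2 * θ + (A + B)))) := by
    intro θ
    rw [show 2 * θ + 2 * A = 2 * (A + θ) by ring, show 2 * θ + 2 * B = 2 * (B + θ) by ring,
      show 2 * θ + (A + B) = (A + θ) + (B + θ) by ring,
      show A - B = (A + θ) - (B + θ) by ring, Real.cos_two_mul, Real.cos_two_mul,
      Real.cos_add (A + θ), Real.cos_sub (A + θ)]
    ring
  rw [integral_Ico_eq_integral_Ioc, ← intervalIntegral.integral_of_le (by positivity)]
  simp_rw [he]
  have a1 := (hi (2 * A)).const_mul (-(1 / 32))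
  have a2 := (hi (2 * B)).const_mul (-(1 / 32))
  have a3 := (hi (A + B)).const_mul (1 / 16)
  rw [intervalIntegral.integral_add (by simp) (a1.add (a2.add a3)),
    intervalIntegral.integral_add a1 (a2.add a3), intervalIntegral.integral_add a2 a3]
  simp only [intervalIntegral.integral_const_mul, h0, intervalIntegral.integral_const]
  simp

/-- The `t`-th root of unity `exp (2πi (k - k') / t)` differs from `1`, so its powers with exponents
`0, …, t - 1` sum to zero; the term `M = 0` contributes `1`. -/
lemma sum_cos_phase_diff (t : ℕ) (ht : 2 ≤ t) (k k' : ℕ) (hk : k < t) (hk' : k' < t) (h : k' ≠ k) :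
    ∑ M ∈ Finset.Icc 1 (t - 1), Real.cos (2 * Real.pi * M * (k / t : ℝ) - 2 * Real.pi * M * (k' / t : ℝ)) = -1 := by
  have ht0 : (t : ℝ) ≠ 0 := by positivity
  have ht0' : (t : ℂ) ≠ 0 := by exact_mod_cast ht0
  set w : ℂ := 2 * Real.pi * Complex.I * (((k : ℂ) - k') / t) with hw
  have hz1 : Complex.exp w ≠ 1 := by
    intro h1
    obtain ⟨n, hn⟩ := Complex.exp_eq_one_iff.1 h1
    have hpi : (2 * Real.pi * Complex.I : ℂ) ≠ 0 := Complex.two_pi_I_ne_zero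
    rw [hw, mul_comm (n : ℂ)] at hn
    have h2 := mul_left_cancel₀ hpi hn
    rw [div_eq_iff ht0'] at h2
    have h3 : (k : ℤ) - k' = n * t := by exact_mod_cast h2
    have h4 : (k : ℤ) - k' = 0 := Int.eq_zero_of_abs_lt_dvd (m := t) ⟨n, by rw [h3]; ring⟩
      (by rw [abs_lt]; constructor <;> omega)
    omega
  have hzt : Complex.exp w ^ t = 1 := by
    rw [← Complex.exp_nat_mul, Complex.exp_eq_one_iff]
    exact ⟨(k : ℤ) - k', by rw [hw]; push_cast; field_simp⟩
  have hs : ∑ M ∈ Finset.range t, Complex.exp w ^ M = 0 := by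
    rw [geom_sum_eq hz1, hzt]; simp
  have hr : ∀ M : ℕ, (Complex.exp w ^ M).re =
      Real.cos (2 * Real.pi * M * (k / t : ℝ) - 2 * Real.pi * M * (k' / t : ℝ)) := by
    intro M
    rw [← Complex.exp_nat_mul, ← Complex.exp_ofReal_mul_I_re]
    congr 2
    rw [hw]; push_cast; ring
  have hs2 := congrArg Complex.re hs
  rw [Complex.re_sum, Finset.range_eq_Ico, Finset.sum_eq_sum_Ico_succ_bot (by omega)] at hs2
  have : Finset.Icc 1 (t - 1) = Finset.Ico (0 + 1) t := by ext x; simp; omega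
  rw [this, ← Finset.sum_congr rfl (fun M _ => hr M)]
  simp at hs2 ⊢
  linarith

/-- A smooth upper bound for the Bhattacharyya coefficient of the outcome distributions
`P_{M,θ}(·|k)` and `P_{M,θ}(·|k')`. -/
noncomputable def bhattBound (t k k' M : ℕ) (θ : ℝ) : ℝ :=
  1 - (Real.cos (2 * Real.pi * M * (k / t : ℝ) + θ)
    - Real.cos (2 * Real.pi * M * (k' / t : ℝ) + θ)) ^ 2 / 16

lemma sum_sqrt_measP_le (t k k' M : ℕ) (θ : ℝ) :
    ∑ v : Bool, √(measP t M θ v k * measP t M θ v k') ≤ bhattBound t k k' M θ := by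
  have h (v : Bool) := sqrt_mul_le_mean_sub _ _ (measP_nonneg t M θ v k) (measP_nonneg t M θ v k')
    (measP_le_one t M θ v k) (measP_le_one t M θ v k')
  rw [Fintype.sum_bool]
  refine (add_le_add (h true) (h false)).trans (le_of_eq ?_)
  simp only [measP, bhattBound, if_true, Bool.false_eq_true, if_false]
  ring

lemma integrable_bhattBound (t k k' M : ℕ) :
    Integrable (bhattBound t k k' M) (volume.restrict (Set.Ico (0 : ℝ) (2 * Real.pi))) := by
  have hc : Continuous (bhattBound t k k' M) := by unfold bhattBound; fun_prop
  exact (hc.integrableOn_Icc (a := 0) (b := 2 * Real.pi)).mono_set Set.Ico_subset_Icc_self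

/-- The average over `M` and `θ` of the Bhattacharyya coefficient of one measurement is at most
`15/16`, uniformly in `t`. -/
lemma average_bhatt_le (t : ℕ) (ht : 2 ≤ t) (k k' : ℕ) (hk : k < t) (hk' : k' < t) (h : k' ≠ k) :
    1 / ((t : ℝ) - 1) * (1 / (2 * Real.pi)) * ∑ M ∈ Finset.Icc 1 (t - 1),
      ∫ θ in Set.Ico (0 : ℝ) (2 * Real.pi), bhattBound t k k' M θ ≤ 15 / 16 := by
  have ht1 : (0 : ℝ) < (t : ℝ) - 1 := by
    have : (2 : ℝ) ≤ t := by exact_mod_cast ht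
    linarith
  have hcard : ((t - 1 : ℕ) : ℝ) = (t : ℝ) - 1 := by
    rw [Nat.cast_sub (by omega)]; simp
  simp only [bhattBound, integral_one_sub_cos_sub_cos_sq]
  rw [← Finset.mul_sum, Finset.sum_sub_distrib, ← Finset.sum_div, Finset.sum_sub_distrib,
    sum_cos_phase_diff t ht k k' hk hk' h]
  simp only [Finset.sum_const, Nat.card_Icc, Nat.add_sub_cancel, nsmul_eq_mul, mul_one, hcard]
  have hpi := Real.pi_pos
  rw [show 1 / ((t : ℝ) - 1) * (1 / (2 * Real.pi)) *
      (2 * Real.pi * ((t : ℝ) - 1 - ((t : ℝ) - 1 - -1) / 16)) =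
      ((t : ℝ) - 1 - ((t : ℝ) - 1 - -1) / 16) / ((t : ℝ) - 1) by field_simp,
    div_le_iff₀ ht1]
  linarith

/-- Union bound over the competitors `k'`, at fixed multiples and angles. -/
lemma sum_error_le (t k0 s : ℕ) (M : Fin s → ℕ) (θ : Fin s → ℝ) :
    ∑ v : Fin s → Bool,
      (if ∃ k' : ℕ, k' < t ∧ k' ≠ k0 ∧
            ∏ i, measP t (M i) (θ i) (v i) k0 ≤ ∏ i, measP t (M i) (θ i) (v i) k'
        then ∏ i, measP t (M i) (θ i) (v i) k0 else 0) ≤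
      ∑ k' ∈ (Finset.range t).erase k0, ∏ i, bhattBound t k0 k' (M i) (θ i) := by
  calc _ ≤ ∑ v : Fin s → Bool, ∑ k' ∈ (Finset.range t).erase k0,
        ∏ i, √(measP t (M i) (θ i) (v i) k0 * measP t (M i) (θ i) (v i) k') := by
        refine Finset.sum_le_sum fun v _ => ?_
        have hnn : ∀ k' ∈ (Finset.range t).erase k0,
            0 ≤ ∏ i, √(measP t (M i) (θ i) (v i) k0 * measP t (M i) (θ i) (v i) k') :=
          fun k' _ => Finset.prod_nonneg fun i _ => Real.sqrt_nonneg _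
        split_ifs with hex
        · obtain ⟨k', hk', hne, hle⟩ := hex
          refine le_trans ?_ (Finset.single_le_sum hnn
            (Finset.mem_erase.2 ⟨hne, Finset.mem_range.2 hk'⟩))
          have h0 : 0 ≤ ∏ i, measP t (M i) (θ i) (v i) k0 :=
            Finset.prod_nonneg fun i _ => measP_nonneg _ _ _ _ _
          rw [← Real.sqrt_prod _ fun i _ =>
            mul_nonneg (measP_nonneg _ _ _ _ _) (measP_nonneg _ _ _ _ _), Finset.prod_mul_distrib]
          exact Real.le_sqrt_of_sq_le (by rw [sq]; exact mul_le_mul_of_nonneg_left hle h0)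
        · exact Finset.sum_nonneg hnn
    _ = ∑ k' ∈ (Finset.range t).erase k0, ∏ i, ∑ v : Bool,
        √(measP t (M i) (θ i) v k0 * measP t (M i) (θ i) v k') := by
        rw [Finset.sum_comm]
        refine Finset.sum_congr rfl fun k' _ => ?_
        rw [Finset.prod_univ_sum, Fintype.piFinset_univ]
    _ ≤ _ := Finset.sum_le_sum fun k' _ => Finset.prod_le_prod
        (fun i _ => Finset.sum_nonneg fun v _ => Real.sqrt_nonneg _)
        (fun i _ => sum_sqrt_measP_le _ _ _ _ _)

/-- There is a universal constant `0 < c < 1` such that for every `t ≥ 2`, `k0 < t`, `ε > 0`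
and every number of measurements `s ≥ log(t/ε)/log(1/c)`, the probability (over uniformly
random multiples `M_i ∈ {1,…,t-1}`, uniformly random angles `θ_i ∈ [0,2π)`, and outcomes
`v_i` distributed according to `P_{M_i,θ_i}(·|k0)`) that some `k' ≠ k0` has likelihood at
least that of `k0` is at most `ε`: i.e. `log_{1/c}(t/ε)` measurements suffice. -/
theorem log_measurements_suffice :
    ∃ c : ℝ, 0 < c ∧ c < 1 ∧
      ∀ t : ℕ, 2 ≤ t → ∀ k0 : ℕ, k0 < t → ∀ ε : ℝ, 0 < ε →
        ∀ s : ℕ, Real.log ((t : ℝ) / ε) / Real.log (1 / c) ≤ (s : ℝ) →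
          ((1 / ((t : ℝ) - 1)) ^ s * (1 / (2 * Real.pi)) ^ s) *
              ∑ M ∈ Fintype.piFinset (fun _ : Fin s => Finset.Icc 1 (t - 1)),
                ∫ θ in Set.univ.pi (fun _ : Fin s => Set.Ico (0 : ℝ) (2 * Real.pi)),
                  ∑ v : Fin s → Bool,
                    (if ∃ k' : ℕ, k' < t ∧ k' ≠ k0 ∧
                          ∏ i, measP t (M i) (θ i) (v i) k0 ≤ ∏ i, measP t (M i) (θ i) (v i) k'
                      then ∏ i, measP t (M i) (θ i) (v i) k0 else 0)
            ≤ ε := by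
  refine ⟨15 / 16, by norm_num, by norm_num, ?_⟩
  intro t ht k0 hk0 ε hε s hs
  have ht0 : (0 : ℝ) < t := by positivity
  have ht1 : (0 : ℝ) < (t : ℝ) - 1 := by
    have : (2 : ℝ) ≤ t := by exact_mod_cast ht
    linarith
  have hpi := Real.pi_pos
  have hcs : (t : ℝ) * (15 / 16) ^ s ≤ ε := by
    have hl : 0 < Real.log (1 / (15 / 16)) := Real.log_pos (by norm_num)
    rw [div_le_iff₀ hl, ← Real.log_pow, Real.log_le_log_iff (by positivity) (by positivity),
      div_le_iff₀ hε, div_pow, one_pow, div_mul_eq_mul_div, one_mul, le_div_iff₀ (by positivity)] at hs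
    exact hs
  have hvol : (volume : Measure (Fin s → ℝ)).restrict
      (Set.univ.pi fun _ => Set.Ico (0 : ℝ) (2 * Real.pi)) =
      Measure.pi fun _ => volume.restrict (Set.Ico (0 : ℝ) (2 * Real.pi)) := by
    rw [volume_pi, Measure.restrict_pi_pi]
  rw [hvol]
  have hint (M : Fin s → ℕ) (k' : ℕ) :
      Integrable (fun θ : Fin s → ℝ => ∏ i, bhattBound t k0 k' (M i) (θ i))
        (Measure.pi fun _ => volume.restrict (Set.Ico (0 : ℝ) (2 * Real.pi))) :=
    Integrable.fintype_prod fun i => integrable_bhattBound t k0 k' (M i)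
  calc _ ≤ ((1 / ((t : ℝ) - 1)) ^ s * (1 / (2 * Real.pi)) ^ s) *
        ∑ M ∈ Fintype.piFinset (fun _ : Fin s => Finset.Icc 1 (t - 1)),
          ∫ θ : Fin s → ℝ, ∑ k' ∈ (Finset.range t).erase k0, ∏ i, bhattBound t k0 k' (M i) (θ i)
            ∂(Measure.pi fun _ => volume.restrict (Set.Ico (0 : ℝ) (2 * Real.pi))) := by
        refine mul_le_mul_of_nonneg_left (Finset.sum_le_sum fun M _ => ?_) (by positivity)
        refine integral_mono_of_nonneg (Filter.Eventually.of_forall fun θ => ?_)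
          (integrable_finsetSum _ fun k' _ => hint M k')
          (Filter.Eventually.of_forall fun θ => sum_error_le t k0 s M θ)
        refine Finset.sum_nonneg fun v _ => ?_
        split_ifs
        · exact Finset.prod_nonneg fun i _ => measP_nonneg _ _ _ _ _
        · exact le_rfl
    _ = ∑ k' ∈ (Finset.range t).erase k0, (1 / ((t : ℝ) - 1) * (1 / (2 * Real.pi)) *
        ∑ M ∈ Finset.Icc 1 (t - 1),
          ∫ θ in Set.Ico (0 : ℝ) (2 * Real.pi), bhattBound t k0 k' M θ) ^ s := by
        simp_rw [integral_finsetSum _ fun k' _ => hint _ k']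
        rw [Finset.sum_comm, Finset.mul_sum]
        refine Finset.sum_congr rfl fun k' _ => ?_
        rw [mul_pow, mul_pow]
        congr 1
        simp_rw [fun M : Fin s → ℕ => integral_fintype_prod_eq_prod
          (μ := fun _ : Fin s => volume.restrict (Set.Ico (0 : ℝ) (2 * Real.pi)))
          (fun i => bhattBound t k0 k' (M i))]
        rw [← Finset.prod_univ_sum (fun _ : Fin s => Finset.Icc 1 (t - 1))
          (fun _ M => ∫ θ in Set.Ico (0 : ℝ) (2 * Real.pi), bhattBound t k0 k' M θ)]
        simp
    _ ≤ ∑ k' ∈ (Finset.range t).erase k0, (15 / 16 : ℝ) ^ s := by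
        refine Finset.sum_le_sum fun k' hk' => ?_
        obtain ⟨hne, hlt⟩ := Finset.mem_erase.1 hk'
        refine pow_le_pow_left₀ ?_
          (average_bhatt_le t ht k0 k' hk0 (Finset.mem_range.1 hlt) hne) s
        refine mul_nonneg (by positivity) (Finset.sum_nonneg fun M _ => integral_nonneg fun θ => ?_)
        exact (Finset.sum_nonneg fun v _ => Real.sqrt_nonneg _).trans
          (sum_sqrt_measP_le t k0 k' M θ)
    _ ≤ (t : ℝ) * (15 / 16) ^ s := by
        rw [Finset.sum_const, nsmul_eq_mul]
        refine mul_le_mul_of_nonneg_right ?_ (by positivity)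
        exact_mod_cast (Finset.card_erase_le).trans (Finset.card_range t).le
    _ ≤ ε := hcs
end
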